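/- For every η > 0, the point e = (1/2, 1/2, 1/2, 1/2) is a fixed point of G₁∘G₂, the map G₁∘G₂ is differentiable at e, and both λ₊ = η²/2 + √((η²+η+1)·(η²−η+1))/2 + 1/2 and λ₋ = η²/2 − √((η²+η+1)·(η²−η+1))/2 + 1/2 are real eigenvalues of the Fréchet derivative of G₁∘G₂ at e, with λ₊ > 1 and λ₋ < 1. -/

import Mathlib

/-- Two-step OMWU transition map for even starting time. -/
noncomputable def G1 (η : ℝ) (z : EuclideanSpace ℝ (Fin 4)) : EuclideanSpace ℝ (Fin 4) :=
  !₂[z 1,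
    z 1 * Real.exp (3*η - 2*η * z 3 - η * z 2) /
      (z 1 * Real.exp (3*η - 2*η * z 3 - η * z 2)
        + (1 - z 1) * Real.exp (2*η * z 3 + η * z 2)),
    z 3,
    z 3 * Real.exp (-(3*η) + 2*η * z 1 + η * z 0) /
      (z 3 * Real.exp (-(3*η) + 2*η * z 1 + η * z 0)
        + (1 - z 3) * Real.exp (-(2*η * z 1) - η * z 0))]

/-- Two-step OMWU transition map for odd starting time. -/
noncomputable def G2 (η : ℝ) (z : EuclideanSpace ℝ (Fin 4)) : EuclideanSpace ℝ (Fin 4) :=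
  !₂[z 1,
    z 1 * Real.exp (-(3*η) + 2*η * z 3 + η * z 2) /
      (z 1 * Real.exp (-(3*η) + 2*η * z 3 + η * z 2)
        + (1 - z 1) * Real.exp (-(2*η * z 3) - η * z 2)),
    z 3,
    z 3 * Real.exp (3*η - 2*η * z 1 - η * z 0) /
      (z 3 * Real.exp (3*η - 2*η * z 1 - η * z 0)
        + (1 - z 3) * Real.exp (2*η * z 1 + η * z 0))]

/-!
Reversing the sign of `η` exchanges the even and the odd step, so `G₂ η = G₁ (-η)` and the
derivative of `G₁ ∘ G₂` at the equilibrium is `J(η) J(-η)`, with `J(η)` the Jacobian of `G₁ η`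
there. At the equilibrium the two exponents of every multiplicative-weights step agree. Hence the
step fixes this point, and its derivative is that of the probability plus a quarter of that of the
difference of the exponents.

Under `(z₁, z₂, z₃, z₄) ↦ (z₁ + i z₃, z₂ + i z₄)` the matrix `J(η)` becomes the complex `2 × 2`
matrix `A + iηB` with `A = [[0, 1], [0, 1]]` and `B = [[0, 0], [1/2, 1]]`. Hence `J(η) J(-η)`
becomes a complex matrix of trace `1 + η²` and determinant `η²/4`, and the eigenvalues are the
roots of `X² - (1 + η²) X + η²/4`. This polynomial equals `-3η²/4 < 0` at `1`, so `1` separates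
them.
-/

/-- One multiplicative-weights step on a two-action simplex: the probability `x` of the first
action is reweighted by `exp a` and the probability `1 - x` of the second by `exp b`. -/
noncomputable def mwUpdate (x a b : ℝ) : ℝ :=
  x * Real.exp a / (x * Real.exp a + (1 - x) * Real.exp b)

lemma mwUpdate_self (x a : ℝ) : mwUpdate x a a = x := by
  rw [mwUpdate, ← add_mul, add_sub_cancel, one_mul, mul_div_cancel_right₀ x (Real.exp_ne_zero a)]

section Calculus

variable {E : Type*} [NormedAddCommGroup E] [NormedSpace ℝ E]
  {x a b : E → ℝ} {x' a' b' : E →L[ℝ] ℝ} {p : E}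

lemma hasFDerivAt_mwUpdate
    (hx : HasFDerivAt x x' p) (ha : HasFDerivAt a a' p) (hb : HasFDerivAt b b' p)
    (h : x p * Real.exp (a p) + (1 - x p) * Real.exp (b p) ≠ 0) :
    HasFDerivAt (fun z => mwUpdate (x z) (a z) (b z))
      ((Real.exp (a p) * Real.exp (b p) /
          (x p * Real.exp (a p) + (1 - x p) * Real.exp (b p)) ^ 2) •
        (x' + (x p * (1 - x p)) • (a' - b'))) p := by
  have hnum := hx.mul ha.exp
  have hden := hnum.add ((hx.const_sub 1).mul hb.exp)
  refine (hnum.mul ((hasDerivAt_inv h).comp_hasFDerivAt p hden)).congr_fderiv ?_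
  ext v
  simp only [Pi.mul_apply, Pi.add_apply, Function.comp_apply, add_apply, sub_apply, neg_apply,
    smul_apply, smul_eq_mul]
  field_simp
  ring

lemma hasFDerivAt_mwUpdate_of_eq
    (hx : HasFDerivAt x x' p) (ha : HasFDerivAt a a' p) (hb : HasFDerivAt b b' p)
    (hab : a p = b p) :
    HasFDerivAt (fun z => mwUpdate (x z) (a z) (b z))
      (x' + (x p * (1 - x p)) • (a' - b')) p := by
  have hden : x p * Real.exp (a p) + (1 - x p) * Real.exp (b p) = Real.exp (b p) := by
    rw [hab]; ring
  refine (hasFDerivAt_mwUpdate hx ha hb (by rw [hden]; exact Real.exp_ne_zero _)).congr_fderiv ?_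
  rw [hden, hab, ← sq, div_self (pow_ne_zero 2 (Real.exp_ne_zero _)), one_smul]

end Calculus

/-- The equilibrium of the 2-periodic game: both players mix uniformly at two consecutive
times. -/
noncomputable def equilibrium : EuclideanSpace ℝ (Fin 4) := !₂[1/2, 1/2, 1/2, 1/2]

lemma equilibrium_apply (i : Fin 4) : equilibrium i = 1/2 := by
  fin_cases i <;> rfl

lemma G1_eq_mwUpdate (η : ℝ) (z : EuclideanSpace ℝ (Fin 4)) :
    G1 η z =
      !₂[z 1, mwUpdate (z 1) (3*η - 2*η * z 3 - η * z 2) (2*η * z 3 + η * z 2),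
        z 3, mwUpdate (z 3) (-(3*η) + 2*η * z 1 + η * z 0) (-(2*η * z 1) - η * z 0)] :=
  rfl

lemma G2_eq_G1_neg (η : ℝ) : G2 η = G1 (-η) := by
  funext z
  simp only [G1, G2]
  ring_nf

lemma fst_exponents_eq_at_equilibrium (η : ℝ) :
    3*η - 2*η * equilibrium 3 - η * equilibrium 2 =
      2*η * equilibrium 3 + η * equilibrium 2 := by
  simp only [equilibrium_apply]
  ring

lemma snd_exponents_eq_at_equilibrium (η : ℝ) :
    -(3*η) + 2*η * equilibrium 1 + η * equilibrium 0 =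
      -(2*η * equilibrium 1) - η * equilibrium 0 := by
  simp only [equilibrium_apply]
  ring

lemma G1_equilibrium (η : ℝ) : G1 η equilibrium = equilibrium := by
  rw [G1_eq_mwUpdate, fst_exponents_eq_at_equilibrium, snd_exponents_eq_at_equilibrium,
    mwUpdate_self, mwUpdate_self]
  rfl

lemma G1_comp_G2_equilibrium (η : ℝ) : (G1 η ∘ G2 η) equilibrium = equilibrium := by
  rw [Function.comp_apply, G2_eq_G1_neg, G1_equilibrium, G1_equilibrium]

/-- The Jacobian matrix of `G1 η` at `equilibrium`. -/
noncomputable def G1Jacobian (η : ℝ) : Matrix (Fin 4) (Fin 4) ℝ :=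
  !![0, 1, 0, 0;
     0, 1, -η/2, -η;
     0, 0, 0, 1;
     η/2, η, 0, 1]

lemma G1Jacobian_mulVec (η : ℝ) (v : Fin 4 → ℝ) :
    (G1Jacobian η).mulVec v =
      ![v 1, v 1 - η/2 * v 2 - η * v 3, v 3, v 3 + η/2 * v 0 + η * v 1] := by
  ext i
  rw [Matrix.mulVec, dotProduct, Fin.sum_univ_four]
  fin_cases i <;>
    simp only [G1Jacobian, Fin.zero_eta, Fin.mk_one, Fin.reduceFinMk, Matrix.of_apply,
      Matrix.cons_val', Matrix.cons_val_fin_one, Matrix.cons_val] <;>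
    ring

lemma hasFDerivAt_G1 (η : ℝ) :
    HasFDerivAt (G1 η) (Matrix.toEuclideanCLM (𝕜 := ℝ) (G1Jacobian η)) equilibrium := by
  have hz (i : Fin 4) := PiLp.hasFDerivAt_apply (𝕜 := ℝ) 2 equilibrium i
  rw [← hasFDerivWithinAt_univ, hasFDerivWithinAt_euclidean]
  simp only [hasFDerivWithinAt_univ]
  intro i
  fin_cases i
  · refine (hz 1).congr_fderiv ?_
    ext v
    simp [G1Jacobian_mulVec]
  · have ha := (((hz 3).const_mul (2*η)).const_sub (3*η)).fun_sub ((hz 2).const_mul η)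
    have hb := ((hz 3).const_mul (2*η)).fun_add ((hz 2).const_mul η)
    refine (hasFDerivAt_mwUpdate_of_eq (hz 1) ha hb
      (fst_exponents_eq_at_equilibrium η)).congr_fderiv ?_
    ext v
    simp only [equilibrium_apply, add_apply, sub_apply, neg_apply, smul_apply, smul_eq_mul,
      PiLp.proj_apply, ContinuousLinearMap.comp_apply, Matrix.ofLp_toEuclideanCLM,
      G1Jacobian_mulVec, Fin.mk_one, Matrix.cons_val]
    ring
  · refine (hz 3).congr_fderiv ?_
    ext v
    simp [G1Jacobian_mulVec]
  · have ha := (((hz 1).const_mul (2*η)).const_add (-(3*η))).fun_add ((hz 0).const_mul η)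
    have hb := ((hz 1).const_mul (2*η)).fun_neg.fun_sub ((hz 0).const_mul η)
    refine (hasFDerivAt_mwUpdate_of_eq (hz 3) ha hb
      (snd_exponents_eq_at_equilibrium η)).congr_fderiv ?_
    ext v
    simp only [equilibrium_apply, add_apply, sub_apply, neg_apply, smul_apply, smul_eq_mul,
      PiLp.proj_apply, ContinuousLinearMap.comp_apply, Matrix.ofLp_toEuclideanCLM,
      G1Jacobian_mulVec, Fin.reduceFinMk, Matrix.cons_val]
    ring

lemma hasFDerivAt_G1_comp_G2 (η : ℝ) :
    HasFDerivAt (G1 η ∘ G2 η)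
      (Matrix.toEuclideanCLM (𝕜 := ℝ) (G1Jacobian η * G1Jacobian (-η))) equilibrium := by
  rw [G2_eq_G1_neg, map_mul]
  refine HasFDerivAt.comp equilibrium ?_ (hasFDerivAt_G1 (-η))
  rw [G1_equilibrium]
  exact hasFDerivAt_G1 η

-- In the complex coordinates above, the first row of `J(η) J(-η)` is `(-iη/2, 1 - iη)`, so an
-- eigenvector with first entry `1 - iη` has second entry `μ + iη/2`.
lemma G1Jacobian_mul_G1Jacobian_neg_mulVec (η μ : ℝ)
    (hμ : μ ^ 2 - (1 + η ^ 2) * μ + η ^ 2 / 4 = 0) :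
    (G1Jacobian η * G1Jacobian (-η)).mulVec ![1, μ, -η, η/2] = μ • ![1, μ, -η, η/2] := by
  have h₁ : (G1Jacobian (-η)).mulVec ![1, μ, -η, η/2] = ![μ, μ, η/2, -η * μ] := by
    rw [G1Jacobian_mulVec]
    simp only [Matrix.cons_val]
    congrm ![_, ?_, _, ?_] <;> ring
  have h₂ : (G1Jacobian η).mulVec ![μ, μ, η/2, -η * μ] = μ • ![1, μ, -η, η/2] := by
    rw [G1Jacobian_mulVec]
    simp only [Matrix.cons_val, Matrix.smul_cons, Matrix.smul_empty, smul_eq_mul]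
    congrm ![?_, ?_, ?_, ?_]
    · ring
    · linear_combination -hμ
    · ring
    · ring
  rw [← Matrix.mulVec_mulVec, h₁, h₂]

lemma hasEigenvalue_fderiv_G1_comp_G2 (η μ : ℝ)
    (hμ : μ ^ 2 - (1 + η ^ 2) * μ + η ^ 2 / 4 = 0) :
    Module.End.HasEigenvalue (fderiv ℝ (G1 η ∘ G2 η) equilibrium).toLinearMap μ := by
  rw [(hasFDerivAt_G1_comp_G2 η).fderiv]
  refine Module.End.hasEigenvalue_of_hasEigenvector (x := !₂[1, μ, -η, η/2]) ⟨?_, ?_⟩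
  · rw [Module.End.mem_eigenspace_iff]
    exact congrArg (WithLp.toLp 2) (G1Jacobian_mul_G1Jacobian_neg_mulVec η μ hμ)
  · intro h
    simpa using congrArg (fun v : EuclideanSpace ℝ (Fin 4) => v 0) h

/-- `(1/2,1/2,1/2,1/2)` is a fixed point of `G₁∘G₂`, the map is differentiable there,
and `η²/2 ± √((η²+η+1)(η²−η+1))/2 + 1/2` are eigenvalues of its Fréchet derivative,
the first being `> 1` and the second `< 1`. -/
theorem omwu_two_step_eigenvalues_at_equilibrium (η : ℝ) (hη : 0 < η) :
    (G1 η ∘ G2 η) (!₂[1/2, 1/2, 1/2, 1/2] : EuclideanSpace ℝ (Fin 4)) = !₂[1/2, 1/2, 1/2, 1/2] ∧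
    DifferentiableAt ℝ (G1 η ∘ G2 η) (!₂[1/2, 1/2, 1/2, 1/2] : EuclideanSpace ℝ (Fin 4)) ∧
    Module.End.HasEigenvalue
      (fderiv ℝ (G1 η ∘ G2 η) (!₂[1/2, 1/2, 1/2, 1/2] : EuclideanSpace ℝ (Fin 4))).toLinearMap
      (η^2/2 + Real.sqrt ((η^2+η+1)*(η^2-η+1))/2 + 1/2) ∧
    Module.End.HasEigenvalue
      (fderiv ℝ (G1 η ∘ G2 η) (!₂[1/2, 1/2, 1/2, 1/2] : EuclideanSpace ℝ (Fin 4))).toLinearMap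
      (η^2/2 - Real.sqrt ((η^2+η+1)*(η^2-η+1))/2 + 1/2) ∧
    1 < η^2/2 + Real.sqrt ((η^2+η+1)*(η^2-η+1))/2 + 1/2 ∧
    η^2/2 - Real.sqrt ((η^2+η+1)*(η^2-η+1))/2 + 1/2 < 1 := by
  have hlt : (η^2 - 1)^2 < (η^2+η+1)*(η^2-η+1) := by
    linarith [pow_pos hη 2]
  have hsq := Real.sq_sqrt ((sq_nonneg _).trans hlt.le)
  obtain ⟨hneg, hpos⟩ := Real.sq_lt.mp hlt
  refine ⟨G1_comp_G2_equilibrium η, (hasFDerivAt_G1_comp_G2 η).differentiableAt,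
    hasEigenvalue_fderiv_G1_comp_G2 η _ ?_, hasEigenvalue_fderiv_G1_comp_G2 η _ ?_, ?_, ?_⟩
  · linear_combination hsq / 4
  · linear_combination hsq / 4
  · linarith
  · linarith
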